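/- arXiv:2603.21161 — 3 statements merged into one kernel-verified Lean document; each statement's English description precedes it below -/
import Mathlib

section
/- The function φ(x) = x·cos(x)/sin(x) is strictly antitone (strictly decreasing) on the open interval (0, π). -/
open Real Set

theorem strictAntiOn_x_mul_cot :
    StrictAntiOn (fun x : ℝ => x * Real.cos x / Real.sin x) (Set.Ioo 0 Real.pi) := by
  have hd : ∀ x ∈ Set.Ioo (0:ℝ) Real.pi, HasDerivAt (fun x : ℝ => x * Real.cos x / Real.sin x)
      (((1 * Real.cos x + x * (-Real.sin x)) * Real.sin x - x * Real.cos x * Real.cos x)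
        / Real.sin x ^ 2) x := fun x hx =>
    ((hasDerivAt_id' x).mul (Real.hasDerivAt_cos x)).div (Real.hasDerivAt_sin x)
      (Real.sin_pos_of_mem_Ioo hx).ne'
  apply strictAntiOn_of_deriv_neg (convex_Ioo _ _)
  · exact fun x hx => (hd x hx).continuousAt.continuousWithinAt
  · intro x hx
    rw [interior_Ioo] at hx
    rw [(hd x hx).deriv]
    have hs := Real.sin_pos_of_mem_Ioo hx
    apply div_neg_of_neg_of_pos _ (by positivity)
    have h1 : Real.sin (2 * x) < 2 * x := Real.sin_lt (by linarith [hx.1])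
    rw [Real.sin_two_mul] at h1
    have h2 : (1 * Real.cos x + x * (-Real.sin x)) * Real.sin x - x * Real.cos x * Real.cos x
        = Real.sin x * Real.cos x - x := by
      linear_combination (-x) * Real.sin_sq_add_cos_sq x
    rw [h2]
    linarith
end

section
/- For every natural number N ≥ 2, the function u ↦ sin(N·u/2)/sin(u/2) is strictly antitone (strictly decreasing) on the half-open interval (0, 2π/N]. -/
open Real Set

theorem dk_aux (x y : ℝ) (hx : 0 < x) (hxy : x < y) (n : ℕ) : ((n:ℝ) + 2) * y ≤ π →
    sin (((n:ℝ) + 2) * y) / sin y < sin (((n:ℝ) + 2) * x) / sin x := by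
  induction n with
  | zero =>
    intro h
    have hy : y < π := by norm_num at h; linarith
    have h1 : 0 < sin x := sin_pos_of_pos_of_lt_pi hx (by linarith)
    have h2 : 0 < sin y := sin_pos_of_pos_of_lt_pi (by linarith) hy
    have h3 : cos y < cos x := cos_lt_cos_of_nonneg_of_le_pi hx.le hy.le hxy
    have e : ∀ z : ℝ, 0 < sin z → sin ((((0:ℕ):ℝ) + 2) * z) / sin z = 2 * cos z := by
      intro z hz
      rw [Nat.cast_zero, zero_add, sin_two_mul]
      field_simp
    rw [e x h1, e y h2]
    linarith
  | succ k ih =>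
    intro h
    push_cast at h ⊢
    have hk : (0:ℝ) ≤ k := k.cast_nonneg
    have hy0 : 0 < y := hx.trans hxy
    have hky : 0 ≤ (k:ℝ) * y := by positivity
    have hkx : ((k:ℝ) + 2) * x < ((k:ℝ) + 2) * y := by gcongr
    have hy' : ((k:ℝ) + 2) * y ≤ π := by linarith
    have hy2 : y ≤ π / 2 := by linarith
    have h1 : 0 < sin x := sin_pos_of_pos_of_lt_pi hx (by linarith)
    have h2 : 0 < sin y := sin_pos_of_pos_of_lt_pi (by linarith) (by linarith)
    have h3 : cos y < cos x := cos_lt_cos_of_nonneg_of_le_pi hx.le (by linarith) hxy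
    have h4 : 0 ≤ cos y := cos_nonneg_of_mem_Icc ⟨by linarith, hy2⟩
    have h5 : cos (((k:ℝ) + 2) * y) < cos (((k:ℝ) + 2) * x) :=
      cos_lt_cos_of_nonneg_of_le_pi (by positivity) hy' hkx
    have h6 : 0 ≤ sin (((k:ℝ) + 2) * x) / sin x :=
      div_nonneg (sin_nonneg_of_nonneg_of_le_pi (by positivity) (by linarith)) h1.le
    have e : ∀ z : ℝ, 0 < sin z → sin (((k:ℝ) + 1 + 2) * z) / sin z =
        sin (((k:ℝ) + 2) * z) / sin z * cos z + cos (((k:ℝ) + 2) * z) := by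
      intro z hz
      rw [show ((k:ℝ) + 1 + 2) * z = ((k:ℝ) + 2) * z + z by ring, sin_add]
      field_simp
    rw [e x h1, e y h2]
    have := mul_le_mul (ih hy').le h3.le h4 h6
    linarith

theorem strictAntiOn_dirichlet_kernel (N : ℕ) (hN : 2 ≤ N) :
    StrictAntiOn (fun u : ℝ => Real.sin (N * u / 2) / Real.sin (u / 2))
      (Set.Ioc 0 (2 * Real.pi / N)) := by
  intro a ha b hb hab
  obtain ⟨n, rfl⟩ := Nat.exists_eq_add_of_le' hN
  have hb2 := hb.2
  rw [le_div_iff₀ (by positivity)] at hb2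
  push_cast at hb2
  have := dk_aux (a / 2) (b / 2) (by linarith [ha.1]) (by linarith) n (by linarith)
  simp only [Nat.cast_add, Nat.cast_ofNat, mul_div_assoc]
  exact this
end

section
/- Let δ be a real number with 0 < δ < 2π and 2π·sin(δ/2) > δ. Then there exists N₀ ∈ ℕ such that for all N ≥ N₀ and all real u with δ/N ≤ u ≤ 2π − δ/N, one has ‖S_N(u)‖ ≤ sin(δ/2)/sin(δ/(2N)). -/
open Complex Real Finset

/-- The exponential sum `S_N(u) = Σ_{t=1}^{N} exp(I·t·u)`. -/
noncomputable def expSum (N : ℕ) (u : ℝ) : ℂ :=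
  ∑ t ∈ Finset.Icc 1 N, Complex.exp (Complex.I * t * u)

theorem expSum_mul_aux (N : ℕ) (u : ℝ) :
    expSum N u * (Complex.exp (Complex.I * u) - 1)
      = Complex.exp (Complex.I * u) * (Complex.exp (Complex.I * ((N * u : ℝ) : ℂ)) - 1) := by
  induction N with
  | zero => simp [expSum]
  | succ n ih =>
    have h : expSum (n+1) u = expSum n u + Complex.exp (Complex.I * ((n+1:ℕ):ℂ) * u) := by
      unfold expSum
      rw [Finset.sum_Icc_succ_top (by omega)]
    have h2 : Complex.exp (Complex.I * ((n+1:ℕ):ℂ) * u)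
        = Complex.exp (Complex.I * ((n * u : ℝ) : ℂ)) * Complex.exp (Complex.I * u) := by
      rw [← Complex.exp_add]; congr 1; push_cast; ring
    have h3 : Complex.exp (Complex.I * (((n+1:ℕ) * u : ℝ) : ℂ))
        = Complex.exp (Complex.I * ((n * u : ℝ) : ℂ)) * Complex.exp (Complex.I * u) := by
      rw [← Complex.exp_add]; congr 1; push_cast; ring
    rw [h, add_mul, ih, h2, h3]; ring

theorem norm_expSum_aux (N : ℕ) (u : ℝ) :
    ‖expSum N u‖ * |Real.sin (u / 2)| = |Real.sin (N * (u / 2))| := by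
  have h := congrArg norm (expSum_mul_aux N u)
  rw [norm_mul, norm_mul, Complex.norm_exp_I_mul_ofReal_sub_one,
    Complex.norm_exp_I_mul_ofReal_sub_one, Complex.norm_exp_I_mul_ofReal, norm_mul, norm_mul,
    mul_div_assoc] at h
  simp only [Real.norm_eq_abs, abs_two] at h
  linarith

theorem sin_ratio_aux (a x : ℝ) (ha : 0 < a) (hax : a ≤ x) (n : ℕ) (hn : n * x ≤ π) :
    Real.sin (n * x) * Real.sin a ≤ Real.sin (n * a) * Real.sin x := by
  induction n with
  | zero => simp
  | succ n ih =>
    rcases Nat.eq_zero_or_pos n with rfl | hpos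
    · simp [mul_comm]
    have hn1 : (1:ℝ) ≤ n := by exact_mod_cast hpos
    push_cast at hn ⊢
    have hx0 : 0 < x := by linarith
    have hnx : n * x ≤ π := by nlinarith
    have hx2 : x ≤ π / 2 := by nlinarith
    have hna : n * a ≤ n * x := by gcongr
    have hna0 : 0 ≤ n * a := by positivity
    have ih := ih hnx
    have s1 : 0 ≤ Real.sin a := Real.sin_nonneg_of_nonneg_of_le_pi ha.le (by linarith)
    have s2 : 0 ≤ Real.sin x := Real.sin_nonneg_of_nonneg_of_le_pi hx0.le (by linarith)
    have s3 : 0 ≤ Real.sin (n * a) := Real.sin_nonneg_of_nonneg_of_le_pi hna0 (by linarith)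
    have c1 : 0 ≤ Real.cos x := Real.cos_nonneg_of_neg_pi_div_two_le_of_le (by linarith) hx2
    have c2 : Real.cos x ≤ Real.cos a := Real.cos_le_cos_of_nonneg_of_le_pi ha.le (by linarith) hax
    have c3 : Real.cos (n * x) ≤ Real.cos (n * a) :=
      Real.cos_le_cos_of_nonneg_of_le_pi hna0 hnx hna
    rw [add_mul, add_mul, one_mul, one_mul, Real.sin_add, Real.sin_add]
    have e1 := mul_le_mul_of_nonneg_right ih c1
    have e2 := mul_le_mul_of_nonneg_left c2 (mul_nonneg s3 s2)
    have e3 := mul_le_mul_of_nonneg_right c3 (mul_nonneg s2 s1)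
    nlinarith

theorem eventually_aux (θ : ℝ) (h0 : 0 < θ) (hθ : θ < π * Real.sin θ) :
    ∃ N₀ : ℕ, ∀ N : ℕ, N₀ ≤ N → Real.sin (θ / N) ≤ Real.sin θ * Real.sin (π / N) := by
  have ht : Filter.Tendsto (fun N : ℕ => π * Real.sin θ * Real.sinc (π / N)) Filter.atTop
      (nhds (π * Real.sin θ * 1)) := by
    apply Filter.Tendsto.const_mul
    have := (Real.continuous_sinc.tendsto 0).comp (tendsto_const_div_atTop_nhds_zero_nat π)
    simpa [Function.comp_def] using this
  rw [mul_one] at ht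
  obtain ⟨N₀, hN⟩ := Filter.eventually_atTop.1 (ht.eventually (lt_mem_nhds hθ))
  refine ⟨N₀ + 1, fun N h => ?_⟩
  have hNp : (0:ℝ) < N := by exact_mod_cast (by omega : 0 < N)
  have h1 := hN N (by omega)
  have hp : π / N ≠ 0 := by have := Real.pi_pos; positivity
  rw [Real.sinc_of_ne_zero hp] at h1
  have h2 : π * Real.sin θ * (Real.sin (π / N) / (π / N)) = Real.sin θ * Real.sin (π / N) * N := by
    have := Real.pi_pos
    field_simp
  rw [h2] at h1
  have h3 : Real.sin (θ / N) ≤ θ / N := Real.sin_le (by positivity)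
  exact h3.trans ((div_le_iff₀ hNp).2 h1.le)

theorem norm_expSum_le_of_away_from_zero (δ : ℝ) (hδ0 : 0 < δ)
    (hδ2π : δ < 2 * Real.pi) (hδsin : δ < 2 * Real.pi * Real.sin (δ / 2)) :
    ∃ N₀ : ℕ, ∀ N : ℕ, N₀ ≤ N → ∀ u : ℝ,
      δ / N ≤ u → u ≤ 2 * Real.pi - δ / N →
      ‖expSum N u‖ ≤ Real.sin (δ / 2) / Real.sin (δ / (2 * N)) := by
  obtain ⟨N₀, hN₀⟩ := eventually_aux (δ / 2) (by linarith) (by linarith)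
  refine ⟨N₀ + 1, fun N hN u hu1 hu2 => ?_⟩
  have hN1 : (1:ℝ) ≤ N := by exact_mod_cast (by omega : 1 ≤ N)
  have hNp : (0:ℝ) < N := by linarith
  have hev := hN₀ N (by omega)
  have ha : δ / (2 * N) = δ / 2 / N := by field_simp
  have ha' : δ / N = 2 * (δ / 2 / N) := by field_simp
  rw [ha]
  rw [ha'] at hu1 hu2
  set a := δ / 2 / N with hadef
  have hNa : N * a = δ / 2 := by rw [hadef]; field_simp
  have ha0 : 0 < a := by positivity
  have haπ : a < π := by nlinarith
  have hsa : 0 < Real.sin a := Real.sin_pos_of_pos_of_lt_pi ha0 haπ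
  have hsθ : 0 < Real.sin (δ / 2) := Real.sin_pos_of_pos_of_lt_pi (by linarith) (by linarith)
  have key : ∀ x : ℝ, a ≤ x → x ≤ π / 2 →
      |Real.sin (N * x)| * Real.sin a ≤ Real.sin (δ / 2) * Real.sin x := by
    intro x hx1 hx2
    by_cases h : N * x ≤ π
    · have := sin_ratio_aux a x ha0 hx1 N h
      rw [hNa] at this
      rwa [abs_of_nonneg (Real.sin_nonneg_of_nonneg_of_le_pi
        (mul_nonneg hNp.le (by linarith)) h)]
    · push Not at h
      have h1 : π / N ≤ x := by rw [div_le_iff₀ hNp]; linarith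
      have hp := Real.pi_pos
      have hpn : 0 < π / N := by positivity
      have h2 : Real.sin (π / N) ≤ Real.sin x :=
        Real.sin_le_sin_of_le_of_le_pi_div_two (by linarith) hx2 h1
      calc |Real.sin (N * x)| * Real.sin a ≤ 1 * Real.sin a := by
            gcongr; exact Real.abs_sin_le_one _
        _ ≤ Real.sin (δ / 2) * Real.sin (π / N) := by rw [one_mul]; exact hev
        _ ≤ _ := by gcongr
  have hx1 : a ≤ u / 2 := by linarith
  have hx2 : u / 2 ≤ π - a := by linarith
  have hsx : 0 < Real.sin (u / 2) := Real.sin_pos_of_pos_of_lt_pi (by linarith) (by linarith)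
  have main : |Real.sin (N * (u / 2))| * Real.sin a ≤ Real.sin (δ / 2) * Real.sin (u / 2) := by
    rcases le_total (u / 2) (π / 2) with h | h
    · exact key _ hx1 h
    · have := key (π - u / 2) (by linarith) (by linarith)
      rw [Real.sin_pi_sub, mul_sub, Real.sin_nat_mul_pi_sub] at this
      simpa [abs_mul] using this
  have hn := norm_expSum_aux N u
  rw [abs_of_pos hsx] at hn
  rw [← hn] at main
  rw [le_div_iff₀ hsa]
  exact le_of_mul_le_mul_right (by linarith) hsx
end
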